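/- Asymptotically almost all λυ-terms contain a nested substitution: if t̄(n) denotes the number of λυ-terms of size n containing no subterm of the form a[b/] with b impure (i.e., b containing a closure), then t̄(n)/t(n) → 0 as n → ∞. -/

import Mathlib

open Finset Filter

mutual
inductive Tm : Type
  | idx : Nat → Tm
  | lam : Tm → Tm
  | app : Tm → Tm → Tm
  | clos : Tm → Subst → Tm
inductive Subst : Type
  | slash : Tm → Subst
  | lift : Subst → Subst
  | shift : Subst
end

mutual
/-- Natural size of a λυ-term: every constructor weighs 1; index n has size n+1. -/
def Tm.size : Tm → Nat
  | .idx n => n + 1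
  | .lam a => Tm.size a + 1
  | .app a b => Tm.size a + Tm.size b + 1
  | .clos a s => Tm.size a + Subst.size s + 1
/-- Natural size of an explicit substitution. -/
def Subst.size : Subst → Nat
  | .slash a => Tm.size a + 1
  | .lift s => Subst.size s + 1
  | .shift => 1
end

/-- Number of λυ-terms of size `n`. -/
noncomputable def tcount (n : ℕ) : ℕ := Nat.card {a : Tm // Tm.size a = n}

/-- Number of explicit substitutions of size `n`. -/
noncomputable def scount (n : ℕ) : ℕ := Nat.card {s : Subst // Subst.size s = n}

/-- A λυ-term is impure if it contains a closure constructor. -/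
def Tm.impure : Tm → Bool
  | .idx _ => false
  | .lam a => Tm.impure a
  | .app a b => Tm.impure a || Tm.impure b
  | .clos _ _ => true

mutual
/-- A λυ-term contains no nested substitution: no subterm a[b/] with b impure. -/
def Tm.noNested : Tm → Bool
  | .idx _ => true
  | .lam a => Tm.noNested a
  | .app a b => Tm.noNested a && Tm.noNested b
  | .clos a s => Tm.noNested a && Subst.noNested s
def Subst.noNested : Subst → Bool
  | .slash b => !Tm.impure b && Tm.noNested b
  | .lift s => Subst.noNested s
  | .shift => true
end

/-- Number of λυ-terms of size n with no nested substitution. -/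
noncomputable def tbar (n : ℕ) : ℕ :=
  Nat.card {a : Tm // Tm.size a = n ∧ Tm.noNested a = true}

open scoped ENNReal NNReal Topology

/-!
The λυ-terms of size `n ≥ 1` are in bijection with the binary trees with `n` nodes, so `t(n)`
is the `n`-th Catalan number and grows like `4 ^ n` up to a polynomial factor.

In a term without nested substitution every `b` in a subterm `a[b/]` is pure, so the generating
functions `I`, `P`, `S`, `A` of the indices, the pure terms, and the substitutions and terms without
nested substitution satisfy
`I = x / (1 - x)`, `P = I + x P + x P²`, `S = x P + x S + x`, `A = I + x A + x A² + x A S`.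
At `x = 51 / 200`, slightly to the right of `1 / 4`, this system still has the supersolution
`(7 / 20, 3 / 5, 11 / 20, 6 / 5)`, which bounds by induction the sums restricted to size `< n`;
hence `A` converges there and `t̄(n) = O((200 / 51) ^ n)`, where `200 / 51 < 4`.
-/

section GenFun

/-- The generating function `∑ x ^ size a` of the objects `a ∈ A`. Its values are taken in `ℝ≥0∞`,
so that the sum makes sense for every `x`. -/
noncomputable def genFun {α : Type*} (size : α → ℕ) (A : Set α) (x : ℝ≥0∞) : ℝ≥0∞ :=
  ∑' a : A, x ^ size a

variable {α β γ : Type*} {sα : α → ℕ} {sβ : β → ℕ} {sγ : γ → ℕ} {x : ℝ≥0∞}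

theorem genFun_singleton (a : α) : genFun sα {a} x = x ^ sα a :=
  tsum_singleton a fun b => x ^ sα b

theorem genFun_mono {A B : Set α} (h : A ⊆ B) : genFun sα A x ≤ genFun sα B x :=
  ENNReal.tsum_mono_subtype (fun a => x ^ sα a) h

theorem genFun_union_le (A B : Set α) :
    genFun sα (A ∪ B) x ≤ genFun sα A x + genFun sα B x :=
  ENNReal.tsum_union_le (fun a => x ^ sα a) A B

theorem genFun_image_le {f : α → β} (hf : ∀ a, sβ (f a) = sα a + 1) (A : Set α) :
    genFun sβ (f '' A) x ≤ x * genFun sα A x := by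
  calc genFun sβ (f '' A) x ≤ ∑' a : A, x ^ sβ (f a) :=
        ENNReal.tsum_le_tsum_comp_of_surjective Set.imageFactorization_surjective _
    _ = x * genFun sα A x := by
        simp only [genFun, hf, pow_succ', ENNReal.tsum_mul_left]

theorem genFun_image2_le {f : α → β → γ} (hf : ∀ a b, sγ (f a b) = sα a + sβ b + 1)
    (A : Set α) (B : Set β) :
    genFun sγ (Set.image2 f A B) x ≤ x * (genFun sα A x * genFun sβ B x) := by
  have hsurj : Function.Surjective fun p : A × B =>
      (⟨f p.1 p.2, Set.mem_image2_of_mem p.1.2 p.2.2⟩ : Set.image2 f A B) := by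
    rintro ⟨_, a, ha, b, hb, rfl⟩
    exact ⟨(⟨a, ha⟩, ⟨b, hb⟩), rfl⟩
  calc genFun sγ (Set.image2 f A B) x ≤ ∑' p : A × B, x ^ sγ (f p.1 p.2) :=
        ENNReal.tsum_le_tsum_comp_of_surjective hsurj _
    _ = ∑' (a : A) (b : B), x * (x ^ sα a * x ^ sβ b) := by
        simp only [hf, pow_succ', pow_add]
        exact ENNReal.tsum_prod (f := fun (a : A) (b : B) => x * (x ^ sα a * x ^ sβ b))
    _ = x * (genFun sα A x * genFun sβ B x) := by
        simp only [genFun, ENNReal.tsum_mul_left, ENNReal.tsum_mul_right]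

theorem genFun_le_of_forall_lt {A : Set α} {c : ℝ≥0∞}
    (h : ∀ n, genFun sα {a ∈ A | sα a < n} x ≤ c) : genFun sα A x ≤ c := by
  refine ENNReal.summable.tsum_le_of_sum_le fun s => ?_
  let t : Finset α := s.map (.subtype _)
  have ht : (t : Set α) ⊆ {a ∈ A | sα a < t.sup sα + 1} := fun a ha =>
    ⟨Finset.property_of_mem_map_subtype s ha, Nat.lt_succ_of_le (Finset.le_sup ha)⟩
  calc ∑ a ∈ s, x ^ sα a = ∑ a ∈ t, x ^ sα a :=
        (Finset.sum_map s (.subtype _) fun a => x ^ sα a).symm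
    _ = genFun sα t x := (Finset.tsum_subtype t fun a => x ^ sα a).symm
    _ ≤ genFun sα {a ∈ A | sα a < t.sup sα + 1} x := genFun_mono ht
    _ ≤ c := h _

theorem genFun_le_of_step {A : Set α} {c : ℝ≥0∞}
    (h : ∀ n, genFun sα {a ∈ A | sα a < n} x ≤ c → genFun sα {a ∈ A | sα a < n + 1} x ≤ c) :
    genFun sα A x ≤ c := by
  refine genFun_le_of_forall_lt fun n => ?_
  induction n with
  | zero => simp [genFun]
  | succ n ih => exact h n ih

theorem card_mul_pow_le_genFun (A : Set α) (n : ℕ) :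
    (Nat.card {a // sα a = n ∧ a ∈ A} : ℝ≥0∞) * x ^ n ≤ genFun sα A x := by
  calc (Nat.card {a // sα a = n ∧ a ∈ A} : ℝ≥0∞) * x ^ n
      ≤ ENat.card {a // sα a = n ∧ a ∈ A} * x ^ n := by
        gcongr
        exact_mod_cast ENat.natCast_toNat_le_self _
    _ = ∑' a : {a // sα a = n ∧ a ∈ A}, x ^ sα a := by
        rw [← ENNReal.tsum_const]
        exact tsum_congr fun a => by rw [a.2.1]
    _ ≤ genFun sα A x := genFun_mono (A := {a | sα a = n ∧ a ∈ A}) fun a ha => ha.2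

end GenFun

section Supersolution

variable {x i p s c : ℝ≥0∞}

theorem genFun_indices : genFun Tm.size (Set.range Tm.idx) x = x * (1 - x)⁻¹ := by
  have hinj : Function.Injective Tm.idx := fun m n h => by injection h
  calc genFun Tm.size (Set.range Tm.idx) x = ∑' n : ℕ, x ^ (n + 1) := 
        tsum_range (fun a : Tm => x ^ a.size) hinj
    _ = x * (1 - x)⁻¹ := ENNReal.tsum_geometric_add_one x

theorem genFun_pure_le (hi : genFun Tm.size (Set.range Tm.idx) x ≤ i)
    (hp : i + (x * p + x * (p * p)) ≤ p) :
    genFun Tm.size {a | a.impure = false} x ≤ p := by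
  refine genFun_le_of_step fun n ih => ?_
  set P : Set Tm := {a ∈ {a : Tm | a.impure = false} | a.size < n}
  have hsub : {a ∈ {a : Tm | a.impure = false} | a.size < n + 1} ⊆
      Set.range Tm.idx ∪ (Tm.lam '' P ∪ Set.image2 Tm.app P P) := by
    rintro (k | a | ⟨a, b⟩ | ⟨a, s⟩) ⟨hpure, hsize⟩ <;>
      simp only [Set.mem_ofPred_eq, Tm.impure, Tm.size, Bool.or_eq_false_iff,
        Bool.true_eq_false] at hpure hsize
    · exact .inl ⟨k, rfl⟩
    · exact .inr (.inl ⟨a, ⟨hpure, by omega⟩, rfl⟩)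
    · exact .inr (.inr ⟨a, ⟨hpure.1, by omega⟩, b, ⟨hpure.2, by omega⟩, rfl⟩)
  calc genFun Tm.size {a ∈ {a : Tm | a.impure = false} | a.size < n + 1} x
      ≤ genFun Tm.size (Set.range Tm.idx) x +
          (genFun Tm.size (Tm.lam '' P) x + genFun Tm.size (Set.image2 Tm.app P P) x) :=
        (genFun_mono hsub).trans <| (genFun_union_le _ _).trans <| by
          gcongr; exact genFun_union_le _ _
    _ ≤ i + (x * genFun Tm.size P x + x * (genFun Tm.size P x * genFun Tm.size P x)) := by
        gcongr
        · exact genFun_image_le (fun _ => by rfl) P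
        · exact genFun_image2_le (fun _ _ => by rfl) P P
    _ ≤ i + (x * p + x * (p * p)) := by gcongr
    _ ≤ p := hp

theorem genFun_noNested_subst_le (hp : genFun Tm.size {a | a.impure = false} x ≤ p)
    (hs : x * p + (x * s + x) ≤ s) :
    genFun Subst.size {σ | σ.noNested = true} x ≤ s := by
  refine genFun_le_of_step fun n ih => ?_
  set S : Set Subst := {σ ∈ {σ : Subst | σ.noNested = true} | σ.size < n}
  have hsub : {σ ∈ {σ : Subst | σ.noNested = true} | σ.size < n + 1} ⊆
      Subst.slash '' {a | a.impure = false} ∪ (Subst.lift '' S ∪ {Subst.shift}) := by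
    rintro (b | σ | _) ⟨hnested, hsize⟩ <;>
      simp only [Set.mem_ofPred_eq, Subst.noNested, Subst.size, Bool.and_eq_true,
        Bool.not_eq_true'] at hnested hsize
    · exact .inl ⟨b, hnested.1, rfl⟩
    · exact .inr (.inl ⟨σ, ⟨hnested, by omega⟩, rfl⟩)
    · exact .inr (.inr rfl)
  calc genFun Subst.size {σ ∈ {σ : Subst | σ.noNested = true} | σ.size < n + 1} x
      ≤ genFun Subst.size (Subst.slash '' {a | a.impure = false}) x +
          (genFun Subst.size (Subst.lift '' S) x + genFun Subst.size {Subst.shift} x) :=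
        (genFun_mono hsub).trans <| (genFun_union_le _ _).trans <| by
          gcongr; exact genFun_union_le _ _
    _ ≤ x * genFun Tm.size {a | a.impure = false} x + (x * genFun Subst.size S x + x) := by
        gcongr
        · exact genFun_image_le (fun _ => by rfl) _
        · exact genFun_image_le (fun _ => by rfl) S
        · simp only [genFun_singleton, Subst.size, pow_one, le_refl]
    _ ≤ x * p + (x * s + x) := by gcongr
    _ ≤ s := hs

theorem genFun_noNested_le (hi : genFun Tm.size (Set.range Tm.idx) x ≤ i)
    (hs : genFun Subst.size {σ | σ.noNested = true} x ≤ s)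
    (hc : i + (x * c + (x * (c * c) + x * (c * s))) ≤ c) :
    genFun Tm.size {a | a.noNested = true} x ≤ c := by
  refine genFun_le_of_step fun n ih => ?_
  set A : Set Tm := {a ∈ {a : Tm | a.noNested = true} | a.size < n}
  set S : Set Subst := {σ | σ.noNested = true}
  have hsub : {a ∈ {a : Tm | a.noNested = true} | a.size < n + 1} ⊆
      Set.range Tm.idx ∪
        (Tm.lam '' A ∪ (Set.image2 Tm.app A A ∪ Set.image2 Tm.clos A S)) := by
    rintro (k | a | ⟨a, b⟩ | ⟨a, σ⟩) ⟨hnested, hsize⟩ <;>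
      simp only [Set.mem_ofPred_eq, Tm.noNested, Tm.size, Bool.and_eq_true] at hnested hsize
    · exact .inl ⟨k, rfl⟩
    · exact .inr (.inl ⟨a, ⟨hnested, by omega⟩, rfl⟩)
    · exact .inr (.inr (.inl ⟨a, ⟨hnested.1, by omega⟩, b, ⟨hnested.2, by omega⟩, rfl⟩))
    · exact .inr (.inr (.inr ⟨a, ⟨hnested.1, by omega⟩, σ, hnested.2, rfl⟩))
  calc genFun Tm.size {a ∈ {a : Tm | a.noNested = true} | a.size < n + 1} x
      ≤ genFun Tm.size (Set.range Tm.idx) x + (genFun Tm.size (Tm.lam '' A) x +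
          (genFun Tm.size (Set.image2 Tm.app A A) x +
            genFun Tm.size (Set.image2 Tm.clos A S) x)) :=
        (genFun_mono hsub).trans <| (genFun_union_le _ _).trans <| by
          gcongr
          exact (genFun_union_le _ _).trans <| by gcongr; exact genFun_union_le _ _
    _ ≤ i + (x * genFun Tm.size A x + (x * (genFun Tm.size A x * genFun Tm.size A x) +
          x * (genFun Tm.size A x * genFun Subst.size S x))) := by
        gcongr
        · exact genFun_image_le (fun _ => by rfl) A
        · exact genFun_image2_le (fun _ _ => by rfl) A A
        · exact genFun_image2_le (fun _ _ => by rfl) A S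
    _ ≤ i + (x * c + (x * (c * c) + x * (c * s))) := by gcongr
    _ ≤ c := hc

theorem tbar_mul_pow_le (n : ℕ) : (tbar n : ℝ) * (51 / 200) ^ n ≤ 6 / 5 := by
  have hi : genFun Tm.size (Set.range Tm.idx) (51 / 200 : ℝ≥0) ≤ (7 / 20 : ℝ≥0) := by
    have hsub : (1 : ℝ≥0∞) - (51 / 200 : ℝ≥0) = (149 / 200 : ℝ≥0) :=
      ENNReal.sub_eq_of_eq_add ENNReal.coe_ne_top (by norm_cast; norm_num)
    rw [genFun_indices, hsub, ← ENNReal.coe_inv (by norm_num)]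
    norm_cast
    rw [← NNReal.coe_le_coe]
    norm_num
  have hp : genFun Tm.size {a | a.impure = false} (51 / 200 : ℝ≥0) ≤ (3 / 5 : ℝ≥0) :=
    genFun_pure_le hi (by norm_cast; rw [← NNReal.coe_le_coe]; norm_num)
  have hs : genFun Subst.size {σ | σ.noNested = true} (51 / 200 : ℝ≥0) ≤ (11 / 20 : ℝ≥0) :=
    genFun_noNested_subst_le hp (by norm_cast; rw [← NNReal.coe_le_coe]; norm_num)
  have hc : genFun Tm.size {a | a.noNested = true} (51 / 200 : ℝ≥0) ≤ (6 / 5 : ℝ≥0) :=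
    genFun_noNested_le hi hs (by norm_cast; rw [← NNReal.coe_le_coe]; norm_num)
  have hcard : (tbar n : ℝ≥0∞) * (51 / 200 : ℝ≥0) ^ n ≤ (6 / 5 : ℝ≥0) :=
    (card_mul_pow_le_genFun _ n).trans hc
  have hcard' : (tbar n : ℝ≥0) * (51 / 200) ^ n ≤ 6 / 5 := by exact_mod_cast hcard
  exact_mod_cast hcard'

end Supersolution

section Catalan

/-- The code of a λυ-term as a nonempty binary tree with one node per unit of size. A leaf
is `0`; a node with only a right child turns the term coded by that child into another one: `n` into
`n + 1`, `λa` into `a[↑]`, `a b` into `a[b/]`, and `a[s]` into `a[⇑(s)]`. -/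
def Tm.toTree : Tm → BinaryTree Unit
  | .idx 0 => .node () .nil .nil
  | .idx (n + 1) => .node () .nil (toTree (.idx n))
  | .lam a => .node () (toTree a) .nil
  | .app a b => .node () (toTree a) (toTree b)
  | .clos a .shift => .node () .nil (toTree (.lam a))
  | .clos a (.slash b) => .node () .nil (toTree (.app a b))
  | .clos a (.lift s) => .node () .nil (toTree (.clos a s))
termination_by a => a.size
decreasing_by all_goals simp only [Tm.size, Subst.size]; omega

/-- The operation on λυ-terms that, under `Tm.toTree`, puts a new root without left child on top of
the code. -/
def Tm.promote : Tm → Tm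
  | .idx n => .idx (n + 1)
  | .lam a => .clos a .shift
  | .app a b => .clos a (.slash b)
  | .clos a s => .clos a (.lift s)

/-- The λυ-term coded by a nonempty binary tree, inverse to `Tm.toTree`; the empty tree codes
nothing and gets the junk value `0`. -/
def Tm.ofTree : BinaryTree Unit → Tm
  | .nil => .idx 0
  | .node _ .nil .nil => .idx 0
  | .node _ .nil (.node u l r) => (ofTree (.node u l r)).promote
  | .node _ (.node u l r) .nil => .lam (ofTree (.node u l r))
  | .node _ (.node u l r) (.node u' l' r') => .app (ofTree (.node u l r)) (ofTree (.node u' l' r'))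

theorem Tm.toTree_ne_nil (a : Tm) : a.toTree ≠ .nil := by
  cases a using Tm.toTree.fun_cases <;> simp [Tm.toTree]

theorem Tm.numNodes_toTree (a : Tm) : a.toTree.numNodes = a.size := by
  induction a using Tm.toTree.induct <;>
    simp_all [Tm.toTree, BinaryTree.numNodes, Tm.size, Subst.size] <;> omega

theorem Tm.toTree_promote (a : Tm) : a.promote.toTree = .node () .nil a.toTree := by
  cases a <;> simp only [Tm.promote, Tm.toTree]

theorem Tm.toTree_ofTree {t : BinaryTree Unit} (ht : t ≠ .nil) : (Tm.ofTree t).toTree = t := by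
  induction t using Tm.ofTree.induct <;> simp_all [Tm.ofTree, Tm.toTree, Tm.toTree_promote]

theorem Tm.ofTree_toTree (a : Tm) : Tm.ofTree a.toTree = a := by
  have hright {t : BinaryTree Unit} (ht : t ≠ .nil) :
      Tm.ofTree (.node () .nil t) = (Tm.ofTree t).promote := by
    cases t
    · contradiction
    · rfl
  have hleft {t : BinaryTree Unit} (ht : t ≠ .nil) :
      Tm.ofTree (.node () t .nil) = .lam (Tm.ofTree t) := by
    cases t
    · contradiction
    · rfl
  have hboth {t t' : BinaryTree Unit} (ht : t ≠ .nil) (ht' : t' ≠ .nil) :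
      Tm.ofTree (.node () t t') = .app (Tm.ofTree t) (Tm.ofTree t') := by
    cases t <;> cases t' <;> first | contradiction | rfl
  induction a using Tm.toTree.induct <;> rw [Tm.toTree] <;>
    simp_all [Tm.toTree_ne_nil, Tm.promote, Tm.ofTree]

theorem tcount_eq_catalan {n : ℕ} (hn : 0 < n) : tcount n = catalan n := by
  have hne {t : BinaryTree Unit} (ht : t.numNodes = n) : t ≠ .nil := by
    rintro rfl
    exact hn.ne ht
  have hbij : Set.BijOn Tm.toTree {a | a.size = n} (BinaryTree.treesOfNumNodesEq n) := by
    refine Set.InvOn.bijOn (f' := Tm.ofTree)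
      ⟨fun a _ => a.ofTree_toTree, fun t ht => Tm.toTree_ofTree (hne ?_)⟩
      (fun a ha => ?_) (fun t ht => ?_)
    · simpa using ht
    · simpa [Tm.numNodes_toTree] using ha
    · have ht' : t.numNodes = n := by simpa using ht
      rw [Set.mem_ofPred_eq, ← Tm.numNodes_toTree, Tm.toTree_ofTree (hne ht'), ht']
  calc tcount n = Nat.card (BinaryTree.treesOfNumNodesEq n) :=
        Nat.card_congr (hbij.equiv Tm.toTree)
    _ = catalan n := by
        rw [Nat.card_eq_finsetCard, BinaryTree.treesOfNumNodesEq_card_eq_catalan]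

theorem four_pow_le_mul_catalan {n : ℕ} (hn : 0 < n) : 4 ^ n ≤ 4 * n ^ 2 * catalan n := by
  calc 4 ^ n ≤ 2 * n * n.centralBinom := Nat.four_pow_le_two_mul_self_mul_centralBinom n hn
    _ = 2 * n * ((n + 1) * catalan n) := by rw [succ_mul_catalan_eq_centralBinom]
    _ ≤ 2 * n * (2 * n * catalan n) := by gcongr; omega
    _ = 4 * n ^ 2 * catalan n := by ring

theorem tendsto_div_catalan_of_mul_pow_le {u : ℕ → ℝ} {x c : ℝ} (hx : 1 / 4 < x)
    (hu : ∀ n, 0 ≤ u n) (h : ∀ n, u n * x ^ n ≤ c) :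
    Tendsto (fun n => u n / catalan n) atTop (𝓝 0) := by
  have hx0 : 0 < x := by linarith
  have hr : 1 / (4 * x) < 1 := (div_lt_one (mul_pos four_pos hx0)).2 (by linarith)
  have hlim : Tendsto (fun n : ℕ => 4 * c * ((n : ℝ) ^ 2 * (1 / (4 * x)) ^ n)) atTop (𝓝 0) := by
    simpa only [mul_zero] using
      (tendsto_pow_const_mul_const_pow_of_lt_one 2 (by positivity) hr).const_mul (4 * c)
  refine squeeze_zero' (.of_forall fun n => div_nonneg (hu n) (Nat.cast_nonneg _)) ?_ hlim
  filter_upwards [eventually_gt_atTop 0] with n hn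
  have hcat : (4 : ℝ) ^ n ≤ 4 * n ^ 2 * catalan n := by exact_mod_cast four_pow_le_mul_catalan hn
  have hcat0 : (0 : ℝ) < catalan n :=
    pos_of_mul_pos_right ((by positivity : (0 : ℝ) < 4 ^ n).trans_le hcat) (by positivity)
  have hc : 0 ≤ c := (mul_nonneg (hu n) (by positivity)).trans (h n)
  rw [div_le_iff₀ hcat0]
  calc u n = u n * x ^ n * ((1 / (4 * x)) ^ n * 4 ^ n) := by
        rw [mul_assoc, ← mul_pow, ← mul_pow]
        field_simp
        rw [one_pow, mul_one]
    _ ≤ c * ((1 / (4 * x)) ^ n * (4 * n ^ 2 * catalan n)) := by gcongr; exact h n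
    _ = 4 * c * (n ^ 2 * (1 / (4 * x)) ^ n) * catalan n := by ring

end Catalan

/-- asymptotically almost all λυ-terms contain a nested substitution. -/
theorem stmt10 :
    Tendsto (fun n : ℕ => (tbar n : ℝ) / (tcount n : ℝ)) atTop (nhds 0) := by
  have hlim : Tendsto (fun n => (tbar n : ℝ) / catalan n) atTop (𝓝 0) :=
    tendsto_div_catalan_of_mul_pow_le (by norm_num) (fun _ => Nat.cast_nonneg _) tbar_mul_pow_le
  refine hlim.congr' ?_
  filter_upwards [eventually_gt_atTop 0] with n hn
  rw [tcount_eq_catalan hn]
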